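/- Let Y^A be a conformal Killing field on an open set U ⊂ S^2 with Y^1 = (1/2)∇_C Y^C, and let u be a smooth function with compact support in U. Then ∫_U Y^1 [2∇_A∇_B u ∇^A∇^B u - (Δu)^2] = ∫_U Y^1 [(Δ+2)u]^2 + 2∫_U u (∇^A∇^B Y^1)(∇_A∇_B u - (1/2)(Δu)σ_{AB}). -/

import Mathlib

open MeasureTheory Real
noncomputable section

/-- Points of the stereographic chart of the round unit sphere `S²`
(the chart covers `S²` minus the north pole). -/
abbrev Pt := Fin 2 → ℝ

/-- Partial derivative `∂_a f`. -/
def pd (a : Fin 2) (f : Pt → ℝ) (x : Pt) : ℝ := fderiv ℝ f x (Pi.single a 1)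

/-- The round (unit sphere) metric `σ_{AB}` in stereographic coordinates. -/
def rnd (x : Pt) (a b : Fin 2) : ℝ :=
  (4 / (1 + x 0 ^ 2 + x 1 ^ 2) ^ 2) * (if a = b then 1 else 0)

/-- The inverse round metric `σ^{AB}`. -/
def rndInv (x : Pt) (a b : Fin 2) : ℝ :=
  ((1 + x 0 ^ 2 + x 1 ^ 2) ^ 2 / 4) * (if a = b then 1 else 0)

/-- The area form `ε_{AB}` of the round metric. -/
def rndE (x : Pt) (a b : Fin 2) : ℝ :=
  (4 / (1 + x 0 ^ 2 + x 1 ^ 2) ^ 2) *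
    (if a = 0 ∧ b = 1 then 1 else if a = 1 ∧ b = 0 then -1 else 0)

/-- The area form with raised indices `ε^{AB}`. -/
def rndEUp (x : Pt) (a b : Fin 2) : ℝ :=
  ∑ c, ∑ d, rndInv x a c * rndInv x b d * rndE x c d

/-- Christoffel symbols `Γ^c_{ab}` of the round metric. -/
def Gam (c a b : Fin 2) (x : Pt) : ℝ :=
  (1/2) * ∑ d, rndInv x c d *
    (pd a (fun y => rnd y d b) x + pd b (fun y => rnd y d a) x - pd d (fun y => rnd y a b) x)

/-- Covariant derivative `∇_a Y^b` of a vector field. -/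
def cdVec (Y : Pt → Fin 2 → ℝ) (x : Pt) (a b : Fin 2) : ℝ :=
  pd a (fun y => Y y b) x + ∑ c, Gam b a c x * Y x c

/-- Covariant derivative `∇_a ω_b` of a covector field. -/
def cdCov (ω : Pt → Fin 2 → ℝ) (x : Pt) (a b : Fin 2) : ℝ :=
  pd a (fun y => ω y b) x - ∑ c, Gam c a b x * ω x c

/-- Covariant derivative `∇_a T_{bc}` of a (0,2)-tensor. -/
def cdT2 (T : Pt → Fin 2 → Fin 2 → ℝ) (x : Pt) (a b c : Fin 2) : ℝ :=
  pd a (fun y => T y b c) x - ∑ d, Gam d a b x * T x d c - ∑ d, Gam d a c x * T x b d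

/-- Covariant derivative `∇_a T_b{}^c` of a (1,1)-tensor (lower, upper). -/
def cdMix (T : Pt → Fin 2 → Fin 2 → ℝ) (x : Pt) (a b c : Fin 2) : ℝ :=
  pd a (fun y => T y b c) x - ∑ d, Gam d a b x * T x d c + ∑ d, Gam c a d x * T x b d

/-- Covariant Hessian `∇_a ∇_b f`. -/
def hess (f : Pt → ℝ) (x : Pt) (a b : Fin 2) : ℝ := cdCov (fun y c => pd c f y) x a b

/-- Laplace–Beltrami operator `Δf = σ^{ab} ∇_a∇_b f` of the round metric. -/
def lap (f : Pt → ℝ) (x : Pt) : ℝ := ∑ a, ∑ b, rndInv x a b * hess f x a b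

/-- Covariant divergence `∇_A Y^A` of a vector field. -/
def divg (Y : Pt → Fin 2 → ℝ) (x : Pt) : ℝ := ∑ a, cdVec Y x a a

/-- The area density `√(det σ)` of the round metric in stereographic coordinates. -/
def aDen (x : Pt) : ℝ := 4 / (1 + x 0 ^ 2 + x 1 ^ 2) ^ 2

/-- Smoothness of a vector field. -/
def SmoothVec (Y : Pt → Fin 2 → ℝ) : Prop := ∀ b, ContDiff ℝ (⊤ : ℕ∞) (fun x => Y x b)

/-- The conformal Killing equation `∇^A Y^B + ∇^B Y^A = (∇_C Y^C) σ^{AB}` on a set `U`. -/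
def ConformalKilling (Y : Pt → Fin 2 → ℝ) (U : Set Pt) : Prop :=
  ∀ x ∈ U, ∀ A B : Fin 2,
    (∑ c, rndInv x A c * cdVec Y x c B) + (∑ c, rndInv x B c * cdVec Y x c A)
      = divg Y x * rndInv x A B

/-- The curl `ε_{AB} ∇^A Y^B` of a vector field. -/
def curl (Y : Pt → Fin 2 → ℝ) (x : Pt) : ℝ :=
  ∑ a, ∑ b, ∑ c, rndE x a b * rndInv x a c * cdVec Y x c b


lemma pd_add' {a : Fin 2} {f g : Pt → ℝ} {x : Pt} (hf : DifferentiableAt ℝ f x)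
    (hg : DifferentiableAt ℝ g x) : pd a (fun y => f y + g y) x = pd a f x + pd a g x := by
  simp only [pd]
  rw [fderiv_fun_add hf hg]; rfl

lemma pd_sub' {a : Fin 2} {f g : Pt → ℝ} {x : Pt} (hf : DifferentiableAt ℝ f x)
    (hg : DifferentiableAt ℝ g x) : pd a (fun y => f y - g y) x = pd a f x - pd a g x := by
  simp only [pd]
  rw [fderiv_fun_sub hf hg]; rfl

lemma pd_mul' {a : Fin 2} {f g : Pt → ℝ} {x : Pt} (hf : DifferentiableAt ℝ f x)
    (hg : DifferentiableAt ℝ g x) :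
    pd a (fun y => f y * g y) x = f x * pd a g x + g x * pd a f x := by
  simp only [pd]
  rw [fderiv_fun_mul hf hg]; rfl

lemma pd_const' {a : Fin 2} {c : ℝ} {x : Pt} : pd a (fun _ => c) x = 0 := by
  simp [pd]

lemma pd_coord {a b : Fin 2} {x : Pt} : pd a (fun y => y b) x = if b = a then 1 else 0 := by
  simp only [pd]
  rw [(hasFDerivAt_apply b x).fderiv]
  simp [Pi.single_apply]

lemma pd_congr {a : Fin 2} {f g : Pt → ℝ} {x : Pt} (h : f =ᶠ[nhds x] g) :
    pd a f x = pd a g x := by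
  simp only [pd]; rw [h.fderiv_eq]

lemma pd_smooth {a : Fin 2} {f : Pt → ℝ} (hf : ContDiff ℝ (⊤ : ℕ∞) f) :
    ContDiff ℝ (⊤ : ℕ∞) (pd a f) := by
  have := hf.fderiv_right (m := (⊤ : ℕ∞)) (by simp)
  exact this.clm_apply contDiff_const

lemma pd_comm {a b : Fin 2} {f : Pt → ℝ} (hf : ContDiff ℝ (⊤ : ℕ∞) f) (x : Pt) :
    pd a (pd b f) x = pd b (pd a f) x := by
  have h1 : ContDiff ℝ (⊤ : ℕ∞) (fderiv ℝ f) := hf.fderiv_right (m := (⊤ : ℕ∞)) (by simp)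
  have h2 : DifferentiableAt ℝ (fderiv ℝ f) x := h1.differentiable (by simp) x
  have key : ∀ v w : Pt, fderiv ℝ (fun y => fderiv ℝ f y v) x w = fderiv ℝ (fderiv ℝ f) x w v := by
    intro v w
    rw [fderiv_clm_apply h2 (differentiableAt_const v)]
    simp
  have hs : IsSymmSndFDerivAt ℝ f x := by
    apply ContDiffAt.isSymmSndFDerivAt hf.contDiffAt
    rw [minSmoothness_of_isRCLikeNormedField]
    exact WithTop.coe_le_coe.mpr le_top

  show fderiv ℝ (fun y => fderiv ℝ f y (Pi.single b 1)) x (Pi.single a 1)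
    = fderiv ℝ (fun y => fderiv ℝ f y (Pi.single a 1)) x (Pi.single b 1)
  rw [key, key]
  exact hs _ _

/-- conformal factor denominator -/
def Dn (x : Pt) : ℝ := 1 + x 0 ^ 2 + x 1 ^ 2

lemma Dn_pos (x : Pt) : 0 < Dn x := by unfold Dn; positivity

lemma Dn_smooth : ContDiff ℝ (⊤ : ℕ∞) Dn := by unfold Dn; fun_prop

lemma pd_Dn (a : Fin 2) (x : Pt) : pd a Dn x = 2 * x a := by
  have : Dn = fun x : Pt => 1 + x 0 * x 0 + x 1 * x 1 := by funext x; simp [Dn]; ring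
  rw [this, pd_add' (by fun_prop) (by fun_prop), pd_add' (by fun_prop) (by fun_prop),
    pd_mul' (by fun_prop) (by fun_prop), pd_mul' (by fun_prop) (by fun_prop), pd_const',
    pd_coord, pd_coord]
  fin_cases a <;> simp <;> ring

lemma pd_inv' {a : Fin 2} {f : Pt → ℝ} {x : Pt} (hf : DifferentiableAt ℝ f x) (h0 : f x ≠ 0) :
    pd a (fun y => (f y)⁻¹) x = - pd a f x * ((f x)⁻¹) ^ 2 := by
  simp only [pd]
  have h := ((hasDerivAt_inv h0).comp_hasFDerivAt x hf.hasFDerivAt).fderiv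
  have h2 : fderiv ℝ (fun y => (f y)⁻¹) x = -(f x ^ 2)⁻¹ • fderiv ℝ f x := h
  rw [h2]
  simp
  ring

/-- reciprocal of `Dn` -/
def Qn (x : Pt) : ℝ := (Dn x)⁻¹

lemma Qn_smooth : ContDiff ℝ (⊤ : ℕ∞) Qn := Dn_smooth.inv (fun x => (Dn_pos x).ne')

lemma pd_Qn (a : Fin 2) (x : Pt) : pd a Qn x = - 2 * x a * Qn x ^ 2 := by
  show pd a (fun y => (Dn y)⁻¹) x = _
  rw [pd_inv' (Dn_smooth.differentiable (by simp) x) (Dn_pos x).ne', pd_Dn, Qn]; ring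

lemma Dn_Qn (x : Pt) : Dn x * Qn x = 1 := mul_inv_cancel₀ (Dn_pos x).ne'

lemma rnd_eq (a b : Fin 2) : (fun x => rnd x a b) = fun x => (4 * (if a = b then 1 else 0)) * (Qn x * Qn x) := by
  funext x; simp only [rnd, Qn, Dn, div_eq_mul_inv, ← inv_pow]; ring

lemma rndInv_eq (x : Pt) (a b : Fin 2) : rndInv x a b = Dn x ^ 2 / 4 * (if a = b then 1 else 0) := rfl

lemma aDen_eq (x : Pt) : aDen x = 4 * Qn x ^ 2 := by simp only [aDen, Qn, Dn, div_eq_mul_inv, ← inv_pow]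

lemma pd_rnd (c a b : Fin 2) (x : Pt) :
    pd c (fun y => rnd y a b) x = -16 * (if a = b then 1 else 0) * x c * Qn x ^ 3 := by
  have hq : DifferentiableAt ℝ Qn x := Qn_smooth.differentiable (by simp) x
  rw [rnd_eq, pd_mul' (by fun_prop) (by fun_prop), pd_mul' hq hq, pd_const', pd_Qn]; ring

lemma Gam_eq (c a b : Fin 2) (x : Pt) : Gam c a b x = -2 * Qn x *
    ((if c = b then 1 else 0) * x a + (if c = a then 1 else 0) * x b
      - (if a = b then 1 else 0) * x c) := by
  simp only [Gam, pd_rnd, rndInv_eq]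
  have h := Dn_Qn x
  have h3 : Dn x ^ 2 * Qn x ^ 3 = Qn x := by
    linear_combination (Qn x * (Dn x * Qn x + 1)) * h
  fin_cases c <;> fin_cases a <;> fin_cases b <;> simp [Fin.sum_univ_two] <;>
    first
    | ring1
    | linear_combination (-2 * x 0) * h3
    | linear_combination (-2 * x 1) * h3
    | linear_combination (2 * x 0) * h3
    | linear_combination (2 * x 1) * h3

lemma hess_eq (f : Pt → ℝ) (x : Pt) (a b : Fin 2) : hess f x a b =
    pd a (pd b f) x + 2 * Qn x * (x a * pd b f x + x b * pd a f x
      - (if a = b then 1 else 0) * (x 0 * pd 0 f x + x 1 * pd 1 f x)) := by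
  simp only [hess, cdCov, Gam_eq, Fin.sum_univ_two]
  fin_cases a <;> fin_cases b <;> simp <;> ring

lemma lap_eq (f : Pt → ℝ) (x : Pt) : lap f x =
    Dn x ^ 2 / 4 * (pd 0 (pd 0 f) x + pd 1 (pd 1 f) x) := by
  simp only [lap, hess_eq, rndInv_eq, Fin.sum_univ_two]
  simp; ring

lemma divg_eq (Y : Pt → Fin 2 → ℝ) : divg Y = fun x =>
    pd 0 (fun y => Y y 0) x + pd 1 (fun y => Y y 1) x
      - 4 * Qn x * (x 0 * Y x 0 + x 1 * Y x 1) := by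
  funext x
  simp only [divg, cdVec, Gam_eq, Fin.sum_univ_two]
  simp; ring

lemma SmD {f : Pt → ℝ} (hf : ContDiff ℝ (⊤ : ℕ∞) f) (x : Pt) : DifferentiableAt ℝ f x :=
  hf.differentiable (by simp) x

/-- rescaled trace-free Hessian, diagonal component -/
def T0 (f : Pt → ℝ) (x : Pt) : ℝ :=
  1 / 8 * (Dn x * Dn x * (pd 0 (pd 0 f) x - pd 1 (pd 1 f) x))
    + 1 / 2 * (Dn x * (x 0 * pd 0 f x - x 1 * pd 1 f x))

/-- rescaled trace-free Hessian, off-diagonal component -/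
def T1 (f : Pt → ℝ) (x : Pt) : ℝ :=
  1 / 4 * (Dn x * Dn x * pd 0 (pd 1 f) x)
    + 1 / 2 * (Dn x * (x 0 * pd 1 f x + x 1 * pd 0 f x))

/-- `(Δ + 2) f` -/
def Wn (f : Pt → ℝ) (x : Pt) : ℝ :=
  1 / 4 * (Dn x * Dn x * (pd 0 (pd 0 f) x + pd 1 (pd 1 f) x)) + 2 * f x

section
variable {f : Pt → ℝ} (hf : ContDiff ℝ (⊤ : ℕ∞) f)

lemma coord_smooth (a : Fin 2) : ContDiff ℝ (⊤ : ℕ∞) (fun x : Pt => x a) := by fun_prop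

lemma T0_smooth {f : Pt → ℝ} (hf : ContDiff ℝ (⊤ : ℕ∞) f) : ContDiff ℝ (⊤ : ℕ∞) (T0 f) := by
  have h := fun a => pd_smooth (a := a) hf
  have h2 := fun a b => pd_smooth (a := a) (h b)
  have hD := Dn_smooth
  have h00 := h2 0 0
  have h11 := h2 1 1
  have h0 := h 0
  have h1 := h 1
  unfold T0; fun_prop

lemma T1_smooth {f : Pt → ℝ} (hf : ContDiff ℝ (⊤ : ℕ∞) f) : ContDiff ℝ (⊤ : ℕ∞) (T1 f) := by
  have h := fun a => pd_smooth (a := a) hf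
  have h2 := fun a b => pd_smooth (a := a) (h b)
  have hD := Dn_smooth
  have h00 := h2 0 1
  have h0 := h 0
  have h1 := h 1
  unfold T1; fun_prop

lemma Wn_smooth {f : Pt → ℝ} (hf : ContDiff ℝ (⊤ : ℕ∞) f) : ContDiff ℝ (⊤ : ℕ∞) (Wn f) := by
  have h := fun a => pd_smooth (a := a) hf
  have h2 := fun a b => pd_smooth (a := a) (h b)
  have hD := Dn_smooth
  have h00 := h2 0 0
  have h11 := h2 1 1
  unfold Wn; fun_prop

lemma pd_T0 {f : Pt → ℝ} (hf : ContDiff ℝ (⊤ : ℕ∞) f) (a : Fin 2) (x : Pt) : pd a (T0 f) x =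
    1 / 8 * (4 * x a * Dn x * (pd 0 (pd 0 f) x - pd 1 (pd 1 f) x)
      + Dn x ^ 2 * (pd a (pd 0 (pd 0 f)) x - pd a (pd 1 (pd 1 f)) x))
    + x a * (x 0 * pd 0 f x - x 1 * pd 1 f x)
    + 1 / 2 * Dn x * ((if 0 = a then 1 else 0) * pd 0 f x - (if 1 = a then 1 else 0) * pd 1 f x
      + x 0 * pd a (pd 0 f) x - x 1 * pd a (pd 1 f) x) := by
  have hD := SmD Dn_smooth x
  have h00 := SmD (pd_smooth (a := 0) (pd_smooth (a := 0) hf)) x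
  have h11 := SmD (pd_smooth (a := 1) (pd_smooth (a := 1) hf)) x
  have h0 := SmD (pd_smooth (a := 0) hf) x
  have h1 := SmD (pd_smooth (a := 1) hf) x
  unfold T0
  simp (disch := fun_prop) only [pd_add', pd_sub', pd_mul', pd_const', pd_coord, pd_Dn]
  ring

lemma pd_T1 {f : Pt → ℝ} (hf : ContDiff ℝ (⊤ : ℕ∞) f) (a : Fin 2) (x : Pt) : pd a (T1 f) x =
    1 / 4 * (4 * x a * Dn x * pd 0 (pd 1 f) x + Dn x ^ 2 * pd a (pd 0 (pd 1 f)) x)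
    + x a * (x 0 * pd 1 f x + x 1 * pd 0 f x)
    + 1 / 2 * Dn x * ((if 0 = a then 1 else 0) * pd 1 f x + (if 1 = a then 1 else 0) * pd 0 f x
      + x 0 * pd a (pd 1 f) x + x 1 * pd a (pd 0 f) x) := by
  have hD := SmD Dn_smooth x
  have h00 := SmD (pd_smooth (a := 0) (pd_smooth (a := 1) hf)) x
  have h0 := SmD (pd_smooth (a := 0) hf) x
  have h1 := SmD (pd_smooth (a := 1) hf) x
  unfold T1
  simp (disch := fun_prop) only [pd_add', pd_sub', pd_mul', pd_const', pd_coord, pd_Dn]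
  ring

lemma pd_Wn {f : Pt → ℝ} (hf : ContDiff ℝ (⊤ : ℕ∞) f) (a : Fin 2) (x : Pt) : pd a (Wn f) x =
    1 / 4 * (4 * x a * Dn x * (pd 0 (pd 0 f) x + pd 1 (pd 1 f) x)
      + Dn x ^ 2 * (pd a (pd 0 (pd 0 f)) x + pd a (pd 1 (pd 1 f)) x)) + 2 * pd a f x := by
  have hD := SmD Dn_smooth x
  have h00 := SmD (pd_smooth (a := 0) (pd_smooth (a := 0) hf)) x
  have h11 := SmD (pd_smooth (a := 1) (pd_smooth (a := 1) hf)) x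
  have h0 := SmD hf x
  unfold Wn
  simp (disch := fun_prop) only [pd_add', pd_sub', pd_mul', pd_const', pd_coord, pd_Dn]
  ring

end

/-- the flux, component 0 -/
def V0 (p u : Pt → ℝ) (x : Pt) : ℝ :=
  2 * (p x * (T0 u x * pd 0 u x + T1 u x * pd 1 u x))
    - 2 * (u x * (T0 u x * pd 0 p x + T1 u x * pd 1 p x))
    + Wn u x * (u x * pd 0 p x - p x * pd 0 u x)

/-- the flux, component 1 -/
def V1 (p u : Pt → ℝ) (x : Pt) : ℝ :=
  2 * (p x * (T1 u x * pd 0 u x - T0 u x * pd 1 u x))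
    - 2 * (u x * (T1 u x * pd 0 p x - T0 u x * pd 1 p x))
    + Wn u x * (u x * pd 1 p x - p x * pd 1 u x)

lemma V0_smooth {p u : Pt → ℝ} (hp : ContDiff ℝ (⊤ : ℕ∞) p) (hu : ContDiff ℝ (⊤ : ℕ∞) u) :
    ContDiff ℝ (⊤ : ℕ∞) (V0 p u) := by
  have h0 := pd_smooth (a := 0) hu
  have h1 := pd_smooth (a := 1) hu
  have k0 := pd_smooth (a := 0) hp
  have k1 := pd_smooth (a := 1) hp
  have t0 := T0_smooth hu
  have t1 := T1_smooth hu
  have w := Wn_smooth hu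
  unfold V0; fun_prop

lemma V1_smooth {p u : Pt → ℝ} (hp : ContDiff ℝ (⊤ : ℕ∞) p) (hu : ContDiff ℝ (⊤ : ℕ∞) u) :
    ContDiff ℝ (⊤ : ℕ∞) (V1 p u) := by
  have h0 := pd_smooth (a := 0) hu
  have h1 := pd_smooth (a := 1) hu
  have k0 := pd_smooth (a := 0) hp
  have k1 := pd_smooth (a := 1) hp
  have t0 := T0_smooth hu
  have t1 := T1_smooth hu
  have w := Wn_smooth hu
  unfold V1; fun_prop

lemma div_V {p u : Pt → ℝ} (hp : ContDiff ℝ (⊤ : ℕ∞) p) (hu : ContDiff ℝ (⊤ : ℕ∞) u) (x : Pt)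
    (hL : pd 0 (pd 0 p) x + pd 1 (pd 1 p) x = - 8 * Qn x ^ 2 * p x) :
    16 * Qn x ^ 2 * (p x * (T0 u x ^ 2 + T1 u x ^ 2)) - 4 * Qn x ^ 2 * (p x * Wn u x ^ 2)
      - 2 * (8 * Qn x ^ 2 * (u x * (T0 p x * T0 u x + T1 p x * T1 u x)))
    = pd 0 (V0 p u) x + pd 1 (V1 p u) x := by
  have h := SmD hu x
  have k := SmD hp x
  have h0 := SmD (pd_smooth (a := 0) hu) x
  have h1 := SmD (pd_smooth (a := 1) hu) x
  have k0 := SmD (pd_smooth (a := 0) hp) x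
  have k1 := SmD (pd_smooth (a := 1) hp) x
  have t0 := SmD (T0_smooth hu) x
  have t1 := SmD (T1_smooth hu) x
  have w := SmD (Wn_smooth hu) x
  have c1 := pd_comm (a := 1) (b := 0) hu x
  have c2 := pd_comm (a := 1) (b := 0) hp x
  have c3 : pd 1 (pd 0 (pd 1 u)) x = pd 0 (pd 1 (pd 1 u)) x :=
    pd_comm (a := 1) (b := 0) (pd_smooth (a := 1) hu) x
  have c4 : pd 0 (pd 0 (pd 1 u)) x = pd 1 (pd 0 (pd 0 u)) x := by
    rw [pd_comm (a := 1) (b := 0) (pd_smooth (a := 0) hu) x]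
    congr 1; funext y; exact pd_comm hu y
  unfold V0 V1
  simp (disch := fun_prop) only [pd_add', pd_sub', pd_mul', pd_const', pd_T0 hu, pd_T1 hu,
    pd_Wn hu]
  have e : pd 1 (pd 1 p) x = - 8 * Qn x ^ 2 * p x - pd 0 (pd 0 p) x := by linarith
  simp only [c1, c2, c3, c4, e, T0, T1, Wn]
  have hQ : Qn x = (Dn x)⁻¹ := rfl
  have hD0 : Dn x ≠ 0 := (Dn_pos x).ne'
  have hD : Dn x = 1 + x 0 ^ 2 + x 1 ^ 2 := rfl
  rw [hQ]
  simp
  field_simp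
  rw [hD]
  ring

lemma phi_smooth {Y : Pt → Fin 2 → ℝ} (hY : SmoothVec Y) :
    ContDiff ℝ (⊤ : ℕ∞) (fun y => (1/2) * divg Y y) := by
  rw [divg_eq]
  have h0 := hY 0
  have h1 := hY 1
  have k0 := pd_smooth (a := 0) h0
  have k1 := pd_smooth (a := 1) h1
  have hQ := Qn_smooth
  fun_prop

lemma cauchy_riemann {Y : Pt → Fin 2 → ℝ} {U : Set Pt} (h : ConformalKilling Y U) {x : Pt}
    (hx : x ∈ U) : pd 1 (fun y => Y y 1) x = pd 0 (fun y => Y y 0) x ∧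
      pd 1 (fun y => Y y 0) x = - pd 0 (fun y => Y y 1) x := by
  have h00 := h x hx 0 0
  have h01 := h x hx 0 1
  have hD : Dn x ^ 2 ≠ 0 := pow_ne_zero _ (Dn_pos x).ne'
  simp only [divg, cdVec, Gam_eq, rndInv_eq, Fin.sum_univ_two] at h00 h01
  simp at h00 h01
  constructor
  · apply mul_left_cancel₀ hD; linarith
  · apply mul_left_cancel₀ hD; linarith

lemma lap_phi {Y : Pt → Fin 2 → ℝ} (hY : SmoothVec Y) {U : Set Pt} (hU : IsOpen U)
    (h : ConformalKilling Y U) {x : Pt} (hx : x ∈ U) :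
    pd 0 (pd 0 (fun y => (1/2) * divg Y y)) x + pd 1 (pd 1 (fun y => (1/2) * divg Y y)) x
      = - 8 * Qn x ^ 2 * ((1/2) * divg Y x) := by
  have hA := hY 0
  have hB := hY 1
  set A : Pt → ℝ := fun y => Y y 0 with hAdef
  set B : Pt → ℝ := fun y => Y y 1 with hBdef
  have A0 := pd_smooth (a := 0) hA
  have A1 := pd_smooth (a := 1) hA
  have B0 := pd_smooth (a := 0) hB
  have B1 := pd_smooth (a := 1) hB
  have cr1 : ∀ y ∈ U, pd 1 B y = pd 0 A y := fun y hy => (cauchy_riemann h hy).1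
  have cr2 : ∀ y ∈ U, pd 1 A y = - pd 0 B y := fun y hy => (cauchy_riemann h hy).2
  have ev : ∀ {f g : Pt → ℝ} (a : Fin 2), (∀ y ∈ U, f y = g y) → ∀ y ∈ U, pd a f y = pd a g y := by
    intro f g a hfg y hy
    apply pd_congr
    filter_upwards [hU.mem_nhds hy] with z hz using hfg z hz
  have neg : ∀ (a : Fin 2) (f : Pt → ℝ) (y : Pt), pd a (fun z => - f z) y = - pd a f y := by
    intro a f y
    simp only [pd]
    rw [fderiv_fun_neg]; rfl
  have hAh : ∀ y ∈ U, pd 1 (pd 1 A) y = - pd 0 (pd 0 A) y := by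
    intro y hy
    rw [ev 1 cr2 y hy, neg, pd_comm hB, ev 0 cr1 y hy]
  have hBh : ∀ y ∈ U, pd 1 (pd 1 B) y = - pd 0 (pd 0 B) y := by
    intro y hy
    rw [ev 1 cr1 y hy, pd_comm hA, ev 0 cr2 y hy, neg]
  have m01 : pd 1 (pd 0 A) x = - pd 0 (pd 0 B) x := by
    rw [pd_comm hA, ev 0 cr2 x hx, neg]
  have hphi : ∀ y ∈ U, (1/2) * divg Y y = pd 0 A y - 2 * (Qn y * (y 0 * A y + y 1 * B y)) := by
    intro y hy
    rw [divg_eq]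
    show (1/2) * (pd 0 A y + pd 1 B y - 4 * Qn y * (y 0 * A y + y 1 * B y)) = _
    rw [cr1 y hy]; ring
  have hpd : ∀ a, ∀ y ∈ U, pd a (fun y => (1/2) * divg Y y) y =
      pd a (pd 0 A) y - 2 * (Qn y * ((if 0 = a then 1 else 0) * A y + y 0 * pd a A y
        + ((if 1 = a then 1 else 0) * B y + y 1 * pd a B y))
        - 2 * (y a * (Qn y * Qn y)) * (y 0 * A y + y 1 * B y)) := by
    intro a y hy
    rw [ev a hphi y hy]
    have s1 := SmD A0 y
    have s2 := SmD hA y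
    have s3 := SmD hB y
    have s4 := SmD Qn_smooth y
    simp (disch := fun_prop) only [pd_add', pd_sub', pd_mul', pd_const', pd_coord, pd_Qn]
    ring
  rw [ev 0 (hpd 0) x hx, ev 1 (hpd 1) x hx, hphi x hx]
  have s1 := SmD (pd_smooth (a := 0) A0) x
  have s1' := SmD (pd_smooth (a := 1) A0) x
  have s2 := SmD hA x
  have s3 := SmD hB x
  have s4 := SmD Qn_smooth x
  have s5 := SmD A0 x
  have s6 := SmD A1 x
  have s7 := SmD B0 x
  have s8 := SmD B1 x
  have third : pd 1 (pd 1 (pd 0 A)) x = - pd 0 (pd 0 (pd 0 A)) x := by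
    have e1 : pd 1 (pd 0 A) = pd 0 (pd 1 A) := by funext y; exact pd_comm hA y
    rw [e1, pd_comm A1, ev 0 hAh x hx, neg]
  simp (disch := fun_prop) only [pd_add', pd_sub', pd_mul', pd_const', pd_coord, pd_Qn]
  simp only [third, hAh x hx, hBh x hx, cr1 x hx, cr2 x hx]
  have hQ : Qn x = (Dn x)⁻¹ := rfl
  have hD0 : Dn x ≠ 0 := (Dn_pos x).ne'
  have hD : Dn x = 1 + x 0 ^ 2 + x 1 ^ 2 := rfl
  rw [hQ]
  simp
  field_simp
  rw [hD]
  ring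

lemma integral_pd_zero {V : Pt → ℝ} (hV : ContDiff ℝ (⊤ : ℕ∞) V) (hc : HasCompactSupport V)
    (a : Fin 2) : Integrable (pd a V) ∧ ∫ x, pd a V x = 0 := by
  have hi : Integrable (pd a V) := by
    apply (pd_smooth hV).continuous.integrable_of_hasCompactSupport
    exact (hc.fderiv (𝕜 := ℝ)).comp_left (g := fun L : Pt →L[ℝ] ℝ => L (Pi.single a 1)) rfl
  refine ⟨hi, ?_⟩
  have h := integral_mul_fderiv_eq_neg_fderiv_mul_of_integrable (μ := (volume : Measure Pt))
    (𝕜 := ℝ) (f := fun _ => (1:ℝ)) (g := V) (v := Pi.single a 1) (by simp)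
    (by simp only [one_mul]; exact hi) (by simpa using hV.continuous.integrable_of_hasCompactSupport hc)
    (fun x _ => differentiableAt_const _) (fun x _ => SmD hV x)
  simp only [one_mul, fderiv_fun_const, Pi.zero_apply, ContinuousLinearMap.zero_apply, zero_mul,
    integral_zero, neg_zero] at h
  exact h

lemma I1_eq (u : Pt → ℝ) (p : ℝ) (x : Pt) (hu : ContDiff ℝ (⊤ : ℕ∞) u) :
    p * (2 * (∑ A, ∑ B, ∑ a, ∑ b,
            hess u x A B * rndInv x A a * rndInv x B b * hess u x a b)
          - (lap u x) ^ 2) * aDen x = 16 * Qn x ^ 2 * (p * (T0 u x ^ 2 + T1 u x ^ 2)) := by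
  simp only [hess_eq, lap_eq, rndInv_eq, aDen_eq, Fin.sum_univ_two, T0, T1,
    pd_comm (a := 1) (b := 0) hu x]
  have hQ : Qn x = (Dn x)⁻¹ := rfl
  have hD0 : Dn x ≠ 0 := (Dn_pos x).ne'
  simp [hQ]
  field_simp
  ring

lemma I2_eq (u : Pt → ℝ) (p : ℝ) (x : Pt) :
    p * (lap u x + 2 * u x) ^ 2 * aDen x = 4 * Qn x ^ 2 * (p * Wn u x ^ 2) := by
  simp only [lap_eq, aDen_eq, Wn]
  ring

lemma I3_eq (u p : Pt → ℝ) (x : Pt) (hu : ContDiff ℝ (⊤ : ℕ∞) u) (hp : ContDiff ℝ (⊤ : ℕ∞) p) :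
    u x * (∑ A, ∑ B, ∑ a, ∑ b,
            rndInv x A a * rndInv x B b * hess p x a b
              * (hess u x A B - (1/2) * lap u x * rnd x A B)) * aDen x
      = 8 * Qn x ^ 2 * (u x * (T0 p x * T0 u x + T1 p x * T1 u x)) := by
  have hr : ∀ a b, rnd x a b = (4 * (if a = b then 1 else 0)) * (Qn x * Qn x) :=
    fun a b => congrFun (rnd_eq a b) x
  simp only [hess_eq, lap_eq, rndInv_eq, aDen_eq, Fin.sum_univ_two, T0, T1, hr,
    pd_comm (a := 1) (b := 0) hu x, pd_comm (a := 1) (b := 0) hp x]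
  have hQ : Qn x = (Dn x)⁻¹ := rfl
  have hD0 : Dn x ≠ 0 := (Dn_pos x).ne'
  simp [hQ]
  field_simp
  ring

lemma vanish {u : Pt → ℝ} {x : Pt} (hx : x ∉ tsupport u) :
    u x = 0 ∧ T0 u x = 0 ∧ T1 u x = 0 ∧ Wn u x = 0 ∧ pd 0 u x = 0 ∧ pd 1 u x = 0 := by
  have step : ∀ (a : Fin 2) (f : Pt → ℝ), (∀ y, y ∉ tsupport u → f y = 0) →
      ∀ y, y ∉ tsupport u → pd a f y = 0 := by
    intro a f hf y hy
    have : f =ᶠ[nhds y] fun _ => 0 := by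
      filter_upwards [(isClosed_tsupport u).isOpen_compl.mem_nhds hy] with z hz using hf z hz
    rw [pd_congr this, pd_const']
  have z : ∀ y, y ∉ tsupport u → u y = 0 := fun y hy => image_eq_zero_of_notMem_tsupport hy
  have z1 := fun a => step a u z
  have z2 := fun a b => step a (pd b u) (z1 b)
  refine ⟨z x hx, ?_, ?_, ?_, z1 0 x hx, z1 1 x hx⟩
  · simp [T0, z1 _ x hx, z2 _ _ x hx]
  · simp [T1, z1 _ x hx, z2 _ _ x hx]
  · simp [Wn, z x hx, z2 _ _ x hx]

/-- for a conformal Killing field `Y^A` on an open set `U ⊆ S²` with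
`Y¹ = ½ ∇_C Y^C` and `u` smooth with compact support in `U`,
`∫_U Y¹[2∇_A∇_Bu ∇^A∇^Bu - (Δu)²]
  = ∫_U Y¹[(Δ+2)u]² + 2∫_U u (∇^A∇^B Y¹)(∇_A∇_Bu - ½(Δu)σ_{AB})`. -/
theorem conformalKilling_quadratic_integral
    (U : Set Pt) (hU : IsOpen U)
    (Y : Pt → Fin 2 → ℝ) (hY : SmoothVec Y)
    (hCKE : ConformalKilling Y U)
    (u : Pt → ℝ) (hu : ContDiff ℝ (⊤ : ℕ∞) u)
    (husupp : HasCompactSupport u) (huU : tsupport u ⊆ U) :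
    (∫ x in U,
      ((1/2) * divg Y x) *
        (2 * (∑ A, ∑ B, ∑ a, ∑ b,
            hess u x A B * rndInv x A a * rndInv x B b * hess u x a b)
          - (lap u x) ^ 2) * aDen x)
    = (∫ x in U, ((1/2) * divg Y x) * (lap u x + 2 * u x) ^ 2 * aDen x)
      + 2 * ∫ x in U,
          u x * (∑ A, ∑ B, ∑ a, ∑ b,
            rndInv x A a * rndInv x B b * hess (fun y => (1/2) * divg Y y) x a b
              * (hess u x A B - (1/2) * lap u x * rnd x A B)) * aDen x := by

  have hp := phi_smooth hY
  have hL := fun x (hx : x ∈ U) => lap_phi hY hU hCKE hx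
  simp only [I1_eq u _ _ hu, I2_eq, I3_eq u _ _ hu hp]
  generalize hpd : (fun y => (1/2) * divg Y y) = p at hp hL ⊢
  have hpx : ∀ x, (1/2) * divg Y x = p x := fun x => by rw [← hpd]
  simp only [hpx] at hL ⊢
  have t0 := (T0_smooth hu).continuous
  have t1 := (T1_smooth hu).continuous
  have w := (Wn_smooth hu).continuous
  have q := Qn_smooth.continuous
  have s0 := (T0_smooth hp).continuous
  have s1 := (T1_smooth hp).continuous
  have pc := hp.continuous
  have uc := hu.continuous
  have int : ∀ F : Pt → ℝ, Continuous F → (∀ x, x ∉ tsupport u → F x = 0) → Integrable F :=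
    fun F hF h0 => hF.integrable_of_hasCompactSupport (HasCompactSupport.intro husupp h0)
  have i1 : Integrable (fun x => 16 * Qn x ^ 2 * (p x * (T0 u x ^ 2 + T1 u x ^ 2))) := by
    refine int _ (by fun_prop) fun x hx => ?_
    obtain ⟨h, h0, h1, hw, -, -⟩ := vanish hx
    simp [h0, h1]
  have i2 : Integrable (fun x => 4 * Qn x ^ 2 * (p x * Wn u x ^ 2)) := by
    refine int _ (by fun_prop) fun x hx => ?_
    obtain ⟨h, h0, h1, hw, -, -⟩ := vanish hx
    simp [hw]
  have i3 : Integrable (fun x => 8 * Qn x ^ 2 *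
      (u x * (T0 p x * T0 u x + T1 p x * T1 u x))) := by
    refine int _ (by fun_prop) fun x hx => ?_
    obtain ⟨h, h0, h1, hw, -, -⟩ := vanish hx
    simp [h]
  have cV0 : HasCompactSupport (V0 p u) := HasCompactSupport.intro husupp fun x hx => by
    obtain ⟨h, h0, h1, hw, -, -⟩ := vanish hx
    simp [V0, h0, h1, hw]
  have cV1 : HasCompactSupport (V1 p u) := HasCompactSupport.intro husupp fun x hx => by
    obtain ⟨h, h0, h1, hw, -, -⟩ := vanish hx
    simp [V1, h0, h1, hw]
  obtain ⟨j0, e0⟩ := integral_pd_zero (V0_smooth hp hu) cV0 0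
  obtain ⟨j1, e1⟩ := integral_pd_zero (V1_smooth hp hu) cV1 1
  have key : ∫ x in U, (16 * Qn x ^ 2 * (p x * (T0 u x ^ 2 + T1 u x ^ 2))
      - 4 * Qn x ^ 2 * (p x * Wn u x ^ 2)
      - 2 * (8 * Qn x ^ 2 * (u x * (T0 p x * T0 u x + T1 p x * T1 u x)))) = 0 := by
    rw [setIntegral_congr_fun hU.measurableSet (fun x hx => div_V hp hu x (hL x hx))]
    rw [setIntegral_eq_integral_of_forall_compl_eq_zero]
    · rw [integral_add j0 j1, e0, e1, add_zero]
    · intro x hx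
      have hx' : x ∉ tsupport u := fun h => hx (huU h)
      have ev : ∀ V : Pt → ℝ, (∀ y, y ∉ tsupport u → V y = 0) → ∀ a, pd a V x = 0 := by
        intro V hV a
        have : V =ᶠ[nhds x] fun _ => 0 := by
          filter_upwards [(isClosed_tsupport u).isOpen_compl.mem_nhds hx'] with z hz using hV z hz
        rw [pd_congr this, pd_const']
      rw [ev (V0 p u), ev (V1 p u), add_zero]
      · intro y hy
        obtain ⟨h, h0, h1, hw, -, -⟩ := vanish hy
        simp [V1, h0, h1, hw]
      · intro y hy
        obtain ⟨h, h0, h1, hw, -, -⟩ := vanish hy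
        simp [V0, h0, h1, hw]
  rw [integral_sub (by exact i1.integrableOn.sub i2.integrableOn) (i3.integrableOn.const_mul 2),
    integral_sub i1.integrableOn i2.integrableOn, integral_const_mul] at key
  linarith
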